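/- Let ψ: ℝ → ℂ be integrable and square-integrable, with Fourier transform Ψ(f) = ∫_ℝ ψ(t) e^{−i2πft} dt satisfying Ψ(f) = 0 for almost every f ≤ 0 (i.e. ψ is an analytic wavelet). Then for every x ∈ ℝ, ∫_ℝ ψ(t) ψ(t−x) dt = 0; in particular ψ is orthogonal to its complex conjugate. -/

import Mathlib

open MeasureTheory Complex

/-- The Fourier kernel `e^{-i 2 π x}`. -/
noncomputable def fker (x : ℝ) : ℂ := Complex.exp (-2 * Real.pi * x * Complex.I)

/-!
The integral is the convolution of `ψ` with its reflection `t ↦ ψ (-t)`, whose Fourier transform is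
`ξ ↦ Ψ ξ * Ψ (-ξ)`. As `Ψ` vanishes on the negative half-line, this product vanishes almost
everywhere. Integrability of `ψ` then only shows that the convolution is zero almost everywhere;
square-integrability makes it continuous, hence zero everywhere.
-/

open scoped ENNReal FourierTransform Convolution

section Convolution

variable {𝕜 A E F G : Type*} [NontriviallyNormedField 𝕜]
  [NormedAddCommGroup E] [NormedAddCommGroup F] [NormedAddCommGroup G]
  [NormedSpace 𝕜 E] [NormedSpace 𝕜 F] [NormedSpace 𝕜 G] [NormedSpace ℝ G]
  [SMulCommClass ℝ 𝕜 G] [CompleteSpace G]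
  [AddCommGroup A] [TopologicalSpace A] [IsTopologicalAddGroup A]
  [MeasurableSpace A] [BorelSpace A]
  {μ : Measure A} [IsLocallyFiniteMeasure μ] [μ.InnerRegularCompactLTTop]
  [μ.IsAddLeftInvariant] [μ.IsNegInvariant]

theorem continuous_convolution_of_memLp_of_ne_top (B : E →L[𝕜] F →L[𝕜] G) {p q : ℝ≥0∞}
    [p.HolderConjugate q] (hq : q ≠ ∞) {f : A → E} {g : A → F}
    (hf : MemLp f p μ) (hg : MemLp g q μ) : Continuous (f ⋆[B, μ] g) := by
  have : Fact (1 ≤ p) := ⟨ENNReal.HolderConjugate.one_le p q⟩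
  have : Fact (1 ≤ q) := ⟨ENNReal.HolderConjugate.one_le q p⟩
  have : Fact (q ≠ ∞) := ⟨hq⟩
  have hg_neg : MemLp (fun t ↦ g (-t)) q μ :=
    hg.comp_measurePreserving (Measure.measurePreserving_neg μ)
  have h_translate : Continuous fun x : A ↦ DomAddAct.mk (-x) +ᵥ hg_neg.toLp :=
    (DomAddAct.continuous_mk.comp continuous_neg).vadd continuous_const
  have h_coeFn (x : A) :
      ⇑(DomAddAct.mk (-x) +ᵥ hg_neg.toLp) =ᵐ[μ] fun t ↦ g (x - t) := by
    rw [DomAddAct.mk_vadd_toLp]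
    refine (MemLp.coeFn_toLp _).trans (.of_eq ?_)
    ext t
    rw [vadd_eq_add, neg_add, neg_neg, sub_eq_add_neg]
  have h_pairing : f ⋆[B, μ] g =
      fun x : A ↦ B.lpPairing μ p q hf.toLp (DomAddAct.mk (-x) +ᵥ hg_neg.toLp) := by
    ext x
    rw [convolution_def, ContinuousLinearMap.lpPairing_eq_integral]
    apply integral_congr_ae
    filter_upwards [hf.coeFn_toLp, h_coeFn x] with t hft hgt
    rw [hft, hgt]
  rw [h_pairing]
  exact (B.lpPairing μ p q hf.toLp).continuous.comp h_translate

theorem continuous_convolution_of_memLp (B : E →L[𝕜] F →L[𝕜] G) {p q : ℝ≥0∞}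
    [p.HolderConjugate q] {f : A → E} {g : A → F}
    (hf : MemLp f p μ) (hg : MemLp g q μ) : Continuous (f ⋆[B, μ] g) := by
  by_cases hq : q = ∞
  · have hp : p ≠ ∞ :=
      (ENNReal.HolderConjugate.eq_top_iff_eq_one q p).mp hq ▸ ENNReal.one_ne_top
    rw [← convolution_flip]
    exact continuous_convolution_of_memLp_of_ne_top B.flip hp hg hf
  · exact continuous_convolution_of_memLp_of_ne_top B hq hf hg

end Convolution

section Fourier

variable {V E F G : Type*} [NormedAddCommGroup V] [InnerProductSpace ℝ V] [FiniteDimensional ℝ V]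
  [MeasurableSpace V] [BorelSpace V]
  [NormedAddCommGroup E] [NormedSpace ℂ E]
  [NormedAddCommGroup F] [NormedSpace ℂ F]
  [NormedAddCommGroup G] [NormedSpace ℂ G] [CompleteSpace G]

theorem eq_zero_of_fourier_ae_eq_zero {f : V → G} (hf_cont : Continuous f) (hf : Integrable f)
    (hf_fourier : 𝓕 f =ᵐ[volume] 0) : f = 0 := by
  have h_int : Integrable (𝓕 f) := (integrable_zero V G volume).congr hf_fourier.symm
  rw [← hf_cont.fourierInv_fourier_eq hf h_int]
  ext x
  rw [Real.fourierInv_eq]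
  apply integral_eq_zero_of_ae
  filter_upwards [hf_fourier] with ξ hξ
  rw [hξ, Pi.zero_apply, smul_zero]

theorem stmt_12_general [CompleteSpace E] [CompleteSpace F] (B : E →L[ℂ] F →L[ℂ] G) {p q : ℝ≥0∞}
    [p.HolderConjugate q] {f : V → E} {g : V → F}
    (hf : Integrable f) (hfp : MemLp f p) (hg : Integrable g) (hgq : MemLp g q)
    (hfg : ∀ᵐ ξ, B (𝓕 f ξ) (𝓕 g (-ξ)) = 0) (x : V) :
    ∫ t, B (f t) (g (t - x)) = 0 := by
  have hgq_neg : MemLp (fun t ↦ g (-t)) q :=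
    hgq.comp_measurePreserving (Measure.measurePreserving_neg volume)
  have h_fourier : 𝓕 (f ⋆[B] fun t ↦ g (-t)) =ᵐ[volume] 0 := by
    filter_upwards [hfg] with ξ hξ
    rw [Real.fourier_bilin_convolution_eq B hf hg.comp_neg,
      ← Real.fourierInv_eq_fourier_comp_neg, Real.fourierInv_eq_fourier_neg, hξ, Pi.zero_apply]
  have h_zero : (f ⋆[B] fun t ↦ g (-t)) = 0 :=
    eq_zero_of_fourier_ae_eq_zero (continuous_convolution_of_memLp B hfp hgq_neg)
      (hf.integrable_convolution B hg.comp_neg) h_fourier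
  simpa only [convolution_def, neg_sub, Pi.zero_apply] using congrFun h_zero x

end Fourier

theorem ae_or_neg_of_ae_nonpos {A : Type*} [AddCommGroup A] [LinearOrder A] [IsOrderedAddMonoid A]
    [MeasurableSpace A] [MeasurableNeg A] {μ : Measure A} [μ.IsNegInvariant] {P : A → Prop}
    (h : ∀ᵐ a ∂μ, a ≤ 0 → P a) : ∀ᵐ a ∂μ, P a ∨ P (-a) := by
  have h_neg : ∀ᵐ a ∂μ, -a ≤ 0 → P (-a) :=
    (Measure.measurePreserving_neg μ).quasiMeasurePreserving.ae h
  filter_upwards [h, h_neg] with a ha ha_neg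
  exact (le_total a 0).imp ha fun ha_nonneg ↦ ha_neg (neg_nonpos.mpr ha_nonneg)

theorem fourier_eq_integral_mul_fker (ψ : ℝ → ℂ) (f : ℝ) : 𝓕 ψ f = ∫ t, ψ t * fker (f * t) := by
  rw [Real.fourier_real_eq_integral_exp_smul]
  congr 1 with t
  rw [smul_eq_mul, mul_comm, fker]
  congr 2
  push_cast
  ring

theorem stmt_12 (ψ : ℝ → ℂ)
    (hψ1 : Integrable ψ) (hψ2 : Integrable (fun t => ‖ψ t‖ ^ 2))
    (Ψ : ℝ → ℂ) (hΨ : ∀ f, Ψ f = ∫ t, ψ t * fker (f * t))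
    (hanal : ∀ᵐ f : ℝ, f ≤ 0 → Ψ f = 0) :
    ∀ x : ℝ, ∫ t, ψ t * ψ (t - x) = 0 := by
  have h_fourier : 𝓕 ψ = Ψ := funext fun f ↦ (fourier_eq_integral_mul_fker ψ f).trans (hΨ f).symm
  have h_memLp : MemLp ψ 2 := (memLp_two_iff_integrable_sq_norm hψ1.1).2 hψ2
  refine stmt_12_general (.mul ℂ ℂ) hψ1 h_memLp hψ1 h_memLp ?_
  filter_upwards [ae_or_neg_of_ae_nonpos hanal] with f hf
  rwa [h_fourier, ContinuousLinearMap.mul_apply', mul_eq_zero]
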